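/- Two stability parameters θ, η in the semistable cone of d are GIT equivalent if and only if for every nonzero proper subdimension vector e of d, the segment [θ, η] is either contained in W_e or does not meet W_e. -/

import Mathlib

open scoped BigOperators

/-- A representation of a quiver with vertex set `Q0` and arrow set `Q1`
(with source and target maps `s t : Q1 → Q0`) over a field `k`:
a finite-dimensional `k`-vector space at each vertex and a linear map for each arrow. -/
structure QRep (k : Type) [Field k] {Q0 Q1 : Type} (s t : Q1 → Q0) where
  V : Q0 → Type
  [addgrp : ∀ i, AddCommGroup (V i)]
  [mod : ∀ i, Module k (V i)]
  [fd : ∀ i, FiniteDimensional k (V i)]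
  hom : ∀ a : Q1, V (s a) →ₗ[k] V (t a)

attribute [instance] QRep.addgrp QRep.mod QRep.fd

namespace QRep

variable {k : Type} [Field k] {Q0 Q1 : Type} {s t : Q1 → Q0}

/-- The dimension vector of a representation. -/
noncomputable def dimVec (M : QRep k s t) : Q0 → ℕ := fun i => Module.finrank k (M.V i)

/-- A family of subspaces is a subrepresentation if it is invariant under all arrow maps. -/
def IsSubrep (M : QRep k s t) (U : ∀ i, Submodule k (M.V i)) : Prop :=
  ∀ a : Q1, ∀ x ∈ U (s a), M.hom a x ∈ U (t a)

/-- The dimension vector of a family of subspaces. -/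
noncomputable def subDim (M : QRep k s t) (U : ∀ i, Submodule k (M.V i)) : Q0 → ℕ :=
  fun i => Module.finrank k (U i)

/-- The subrepresentation determined by an invariant family of subspaces. -/
def subRep (M : QRep k s t) (U : ∀ i, Submodule k (M.V i)) (h : M.IsSubrep U) :
    QRep k s t where
  V := fun i => U i
  hom := fun a => (M.hom a).restrict (fun x hx => h a x hx)

/-- The quotient representation by an invariant family of subspaces. -/
def quotRep (M : QRep k s t) (U : ∀ i, Submodule k (M.V i)) (h : M.IsSubrep U) :
    QRep k s t where
  V := fun i => M.V i ⧸ U i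
  hom := fun a => (U (s a)).mapQ (U (t a)) (M.hom a) (fun x hx => h a x hx)

/-- Direct sum of two representations. -/
def dsum (M N : QRep k s t) : QRep k s t where
  V := fun i => M.V i × N.V i
  hom := fun a => (M.hom a).prodMap (N.hom a)

variable [Fintype Q0]

/-- The pairing `θ(d) = θ · d` of a stability parameter with a dimension vector. -/
def pair (θ : Q0 → ℝ) (d : Q0 → ℕ) : ℝ := ∑ i, θ i * (d i : ℝ)

/-- `θ`-semistability: `θ(M) = 0` and `θ(M') ≤ 0` for all subrepresentations. -/
def Semistable (θ : Q0 → ℝ) (M : QRep k s t) : Prop :=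
  pair θ M.dimVec = 0 ∧
    ∀ U : ∀ i, Submodule k (M.V i), M.IsSubrep U → pair θ (M.subDim U) ≤ 0

/-- `θ`-stability: `θ(M) = 0` and `θ(M') < 0` for all proper nonzero subrepresentations. -/
def Stable (θ : Q0 → ℝ) (M : QRep k s t) : Prop :=
  pair θ M.dimVec = 0 ∧
    ∀ U : ∀ i, Submodule k (M.V i), M.IsSubrep U →
      U ≠ (fun _ => ⊥) → U ≠ (fun _ => ⊤) → pair θ (M.subDim U) < 0

end QRep

section Defs

variable (k : Type) [Field k] {Q0 Q1 : Type} (s t : Q1 → Q0)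

/-- `e` is a generic subdimension vector of `d` (Schofield's characterization as definition):
every representation of dimension vector `d` admits a subrepresentation of dimension vector `e`. -/
def GenericSub (e d : Q0 → ℕ) : Prop :=
  e ≤ d ∧ ∀ M : QRep k s t, M.dimVec = d →
    ∃ U : ∀ i, Submodule k (M.V i), M.IsSubrep U ∧ M.subDim U = e

variable [Fintype Q0]

/-- The semistable cone of `d`: stability parameters orthogonal to `d` admitting a
semistable representation of dimension vector `d`. -/
def SstCone (d : Q0 → ℕ) : Set (Q0 → ℝ) :=
  {θ | QRep.pair θ d = 0 ∧ ∃ M : QRep k s t, M.dimVec = d ∧ QRep.Semistable θ M}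

/-- The wall `W_e`: parameters `θ` orthogonal to `d` and `e` such that some `θ`-semistable
representation of dimension vector `d` has a subrepresentation of dimension vector `e`. -/
def Wall (d e : Q0 → ℕ) : Set (Q0 → ℝ) :=
  {θ | QRep.pair θ d = 0 ∧ QRep.pair θ e = 0 ∧
    ∃ (M : QRep k s t) (U : ∀ i, Submodule k (M.V i)),
      M.dimVec = d ∧ M.IsSubrep U ∧ M.subDim U = e ∧ QRep.Semistable θ M}

/-- GIT equivalence of stability parameters: equal semistable loci. -/
def GITEquiv (d : Q0 → ℕ) (θ η : Q0 → ℝ) : Prop :=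
  ∀ M : QRep k s t, M.dimVec = d → (QRep.Semistable θ M ↔ QRep.Semistable η M)

end Defs

/-- The hyperplane `H_e` inside the stability space of `d`. -/
def Hset {Q0 : Type} [Fintype Q0] (d e : Q0 → ℕ) : Set (Q0 → ℝ) :=
  {θ | QRep.pair θ d = 0 ∧ QRep.pair θ e = 0}

section Euler

variable {Q0 Q1 : Type} [Fintype Q0] [Fintype Q1]

/-- The Euler form of the quiver. -/
def euler (s t : Q1 → Q0) (x y : Q0 → ℤ) : ℤ :=
  (∑ i, x i * y i) - ∑ a, x (s a) * y (t a)

/-- `ext(d, e)`: the maximum of `−⟨d', e⟩` over generic subdimension vectors `d' ↪ d`. -/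
noncomputable def extGen (k : Type) [Field k] (s t : Q1 → Q0) (d e : Q0 → ℕ) : ℤ :=
  sSup {z : ℤ | ∃ d' : Q0 → ℕ, GenericSub k s t d' d ∧
    z = -(euler s t (fun i => (d' i : ℤ)) (fun i => (e i : ℤ)))}

end Euler

section Schur

variable {Q0 Q1 : Type} (s t : Q1 → Q0)

/-- Coordinates on the representation space `Rep(Q, d)`. -/
def RepCoords (d : Q0 → ℕ) : Type := Σ a : Q1, Fin (d (t a)) × Fin (d (s a))

/-- The representation associated to a point of the representation space. -/
def matToRep (k : Type) [Field k] (d : Q0 → ℕ)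
    (m : ∀ a : Q1, Matrix (Fin (d (t a))) (Fin (d (s a))) k) : QRep k s t where
  V := fun i => Fin (d i) → k
  hom := fun a => Matrix.mulVecLin (m a)

/-- A nonzero representation is indecomposable if it is not a direct sum of two nonzero
subrepresentations. -/
def Indecomposable (k : Type) [Field k] (M : QRep k s t) : Prop :=
  (∃ i, Module.finrank k (M.V i) ≠ 0) ∧
    ¬ ∃ U W : ∀ i, Submodule k (M.V i), M.IsSubrep U ∧ M.IsSubrep W ∧
        U ≠ (fun _ => ⊥) ∧ W ≠ (fun _ => ⊥) ∧ ∀ i, IsCompl (U i) (W i)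

/-- `d` is a Schur root: a general representation of dimension vector `d` is indecomposable,
i.e. all representations outside the vanishing locus of some nonzero polynomial on the
representation space are indecomposable. -/
def IsSchurRoot (k : Type) [Field k] (d : Q0 → ℕ) : Prop :=
  ∃ p : MvPolynomial (RepCoords s t d) k, p ≠ 0 ∧
    ∀ m : ∀ a : Q1, Matrix (Fin (d (t a))) (Fin (d (s a))) k,
      MvPolynomial.eval (fun x => m x.1 x.2.1 x.2.2) p ≠ 0 →
        Indecomposable s t k (matToRep s t k d m)

end Schur

/-!
A representation `M` is `θ`-semistable if and only if, in a one-parameter family `P` of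
representations over `k[T]` with special fibre `L / T L = M`, the lattice `L` minimizes `θ(P / L)`:
this function of lattices is modular and `T`-invariant, so local minima are global. GIT equivalent
parameters therefore have the same minimizing lattices in every family of dimension vector `d`.

Let `M` be semistable for a point of `[θ, η]` and let `N` be `θ`-semistable. In the pencil `M + T N`
a `θ`-minimizing lattice exists, and comparing its `θ`- and `η`-values with those of the lattice
with fibre `M` shows that `M` is `θ`-semistable too (semistable reduction). A subrepresentation of
`M` on which this point vanishes is then killed by both `θ` and `η`, and `M` witnesses that all of
`[θ, η]` lies in the corresponding wall. Conversely, if `M` is `θ`- but not `η`-semistable, then `M`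
stops being semistable somewhere along `[θ, η]`, on a wall that does not contain `η`.
-/

open Module Function

section Codimension

variable {K P P' R : Type*} [DivisionRing K] [AddCommGroup P] [Module K P]
  [AddCommGroup P'] [Module K P'] [AddCommGroup R] [Module K R]

/-- The codimension of a subspace, with the junk value `0` when it is infinite. -/
noncomputable def codim (L : Submodule K P) : ℕ := finrank K (P ⧸ L)

lemma codim_top : codim (⊤ : Submodule K P) = 0 :=
  finrank_zero_of_subsingleton

lemma codim_add_finrank [Module.Finite K P] (L : Submodule K P) :
    codim L + finrank K L = finrank K P :=
  Submodule.finrank_quotient_add_finrank L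

lemma codim_comap_of_surjective {p : P →ₗ[K] R} (hp : Surjective p) (W : Submodule K R) :
    codim (W.comap p) = codim W := by
  have e := LinearMap.quotKerEquivOfSurjective (W.mkQ ∘ₗ p) (W.mkQ_surjective.comp hp)
  rw [LinearMap.ker_comp, Submodule.ker_mkQ] at e
  exact e.finrank_eq

lemma codim_sup_range_add_codim_comap {L : Submodule K P} (hL : L.CoFG) (g : P' →ₗ[K] P) :
    codim (L ⊔ LinearMap.range g) + codim (L.comap g) = codim L := by
  have h_range : LinearMap.range (L.mkQ ∘ₗ g) = (L ⊔ LinearMap.range g).map L.mkQ := by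
    rw [Submodule.map_sup, LinearMap.range_comp, Submodule.mkQ_map_self, bot_sup_eq]
  have h_sup : finrank K ((P ⧸ L) ⧸ LinearMap.range (L.mkQ ∘ₗ g)) =
      codim (L ⊔ LinearMap.range g) := by
    rw [h_range]
    exact (Submodule.quotientQuotientEquivQuotient L (L ⊔ LinearMap.range g) le_sup_left).finrank_eq
  have h_comap : finrank K (LinearMap.range (L.mkQ ∘ₗ g)) = codim (L.comap g) := by
    rw [← (L.mkQ ∘ₗ g).quotKerEquivRange.finrank_eq, LinearMap.ker_comp, Submodule.ker_mkQ, codim]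
  rw [← h_sup, ← h_comap, Submodule.finrank_quotient_add_finrank, codim]

lemma cofg_comap {L : Submodule K P} (hL : L.CoFG) (g : P' →ₗ[K] P) : (L.comap g).CoFG := by
  rw [← L.ker_mkQ, ← LinearMap.ker_comp]
  exact Submodule.CoFG.ker _

lemma cofg_map {L : Submodule K P} (hL : L.CoFG) {g : P →ₗ[K] P'} (hg : (LinearMap.range g).CoFG) :
    (L.map g).CoFG := by
  obtain ⟨C, hC⟩ := L.exists_isCompl
  obtain ⟨D, hD⟩ := (LinearMap.range g).exists_isCompl
  refine Submodule.FG.cofg_of_codisjoint (S := C.map g ⊔ D) ?_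
    (((hL.fg_of_isCompl hC).map g).sup (hg.fg_of_isCompl hD))
  rw [codisjoint_iff, sup_comm, ← sup_assoc, ← Submodule.map_sup, hC.sup_eq_top,
    Submodule.map_top, hD.sup_eq_top]

lemma codim_map {L : Submodule K P} (hL : L.CoFG) {g : P →ₗ[K] P'} (hg : (LinearMap.range g).CoFG)
    (hg_inj : Injective g) : codim (L.map g) = codim (LinearMap.range g) + codim L := by
  rw [← codim_sup_range_add_codim_comap (cofg_map hL hg) g, sup_eq_right.2 LinearMap.map_le_range,
    Submodule.comap_map_eq_of_injective hg_inj]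

lemma codim_sup_add_codim_inf {A B : Submodule K P} (hA : A.CoFG) (hB : B.CoFG) :
    codim (A ⊔ B) + codim (A ⊓ B) = codim A + codim B := by
  have hA' := codim_sup_range_add_codim_comap hA B.subtype
  have hAB := codim_sup_range_add_codim_comap (hA.inf hB) B.subtype
  rw [Submodule.range_subtype] at hA' hAB
  rw [sup_eq_right.2 inf_le_right, Submodule.comap_inf, Submodule.comap_subtype_self,
    inf_top_eq] at hAB
  omega

lemma codim_map_subtype_comap_add_finrank [Module.Finite K R] {L : Submodule K P} (hL : L.CoFG)
    {p : L →ₗ[K] R} (hp : Surjective p) (W : Submodule K R) :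
    codim ((W.comap p).map L.subtype) + finrank K W = codim L + finrank K R := by
  have h_cofg : (W.comap p).CoFG := cofg_comap inferInstance p
  rw [codim_map h_cofg (by rwa [Submodule.range_subtype]) L.subtype_injective,
    Submodule.range_subtype, codim_comap_of_surjective hp, add_assoc, codim_add_finrank]

end Codimension

section WellOrder

open Set in
/-- Along an antitone sequence a negative value of `f` is taken at most once, so the negative terms
have only finitely many possible sums, and the remaining terms generate a well-ordered monoid. -/
lemma isPWO_setOf_sum_antitone {α Γ : Type*} [PartialOrder α] [AddCommGroup Γ] [LinearOrder Γ]
    [IsOrderedAddMonoid Γ] {s : Set α} (hs : s.Finite) (f : α → Γ) :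
    {x | ∃ (n : ℕ) (u : ℕ → α), Antitone u ∧ (∀ c, u c ∈ s) ∧
      (∀ c, u c = u (c + 1) → 0 ≤ f (u c)) ∧ ∑ c ∈ Finset.range n, f (u c) = x}.IsPWO := by
  classical
  let negSums : Set Γ := (fun E : Finset α => ∑ e ∈ E, f e) '' hs.toFinset.powerset
  let nonneg : Set Γ := f '' s ∩ Ici 0
  have h_neg : negSums.IsPWO := ((Finset.finite_toSet _).image _).isPWO
  have h_nonneg : (AddSubmonoid.closure nonneg : Set Γ).IsPWO :=
    ((hs.image f).inter_of_left _).isPWO.addSubmonoid_closure fun x hx => hx.2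
  refine (h_neg.add h_nonneg).mono ?_
  rintro _ ⟨n, u, hu, hus, h_rep, rfl⟩
  let neg := (Finset.range n).filter fun c => f (u c) < 0
  have h_lt : ∀ c ∈ neg, ∀ c', u c = u c' → c' ≤ c := by
    intro c hc c' hcc'
    by_contra! hlt
    have h_succ : u c = u (c + 1) :=
      le_antisymm (hcc'.le.trans (hu (Nat.succ_le_of_lt hlt))) (hu c.le_succ)
    exact (Finset.mem_filter.1 hc).2.not_ge (h_rep c h_succ)
  have h_inj : InjOn u neg := fun c hc c' hc' hcc' =>
    le_antisymm (h_lt c' hc' c hcc'.symm) (h_lt c hc c' hcc')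
  rw [← Finset.sum_filter_add_sum_filter_not _ fun c => f (u c) < 0]
  refine add_mem_add ⟨neg.image u, ?_, Finset.sum_image h_inj⟩ ?_
  · simp only [Finset.coe_powerset, mem_preimage, mem_powerset_iff, Finset.coe_image,
      Finite.coe_toFinset, image_subset_iff]
    exact fun c _ => hus c
  · exact AddSubmonoid.sum_mem _ fun c hc => AddSubmonoid.subset_closure
      ⟨mem_image_of_mem f (hus c), not_lt.1 (Finset.mem_filter.1 hc).2⟩

end WellOrder

namespace QRep

section Pair

variable {Q0 : Type} [Fintype Q0]

lemma pair_zero (θ : Q0 → ℝ) : pair θ 0 = 0 := by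
  simp [pair]

lemma pair_add (θ : Q0 → ℝ) (d e : Q0 → ℕ) : pair θ (d + e) = pair θ d + pair θ e := by
  simp [pair, mul_add, Finset.sum_add_distrib]

lemma pair_sum {ι : Type*} (θ : Q0 → ℝ) (S : Finset ι) (u : ι → Q0 → ℕ) :
    pair θ (∑ c ∈ S, u c) = ∑ c ∈ S, pair θ (u c) := by
  simp only [pair, Finset.sum_apply, Nat.cast_sum, Finset.mul_sum]
  exact Finset.sum_comm

lemma pair_smul_add_smul (a b : ℝ) (θ η : Q0 → ℝ) (d : Q0 → ℕ) :
    pair (a • θ + b • η) d = a * pair θ d + b * pair η d := by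
  simp [pair, add_mul, mul_assoc, Finset.sum_add_distrib, Finset.mul_sum]

end Pair

variable {k : Type} [Field k] {Q0 Q1 : Type} {s t : Q1 → Q0}

lemma subDim_bot (M : QRep k s t) : M.subDim ⊥ = 0 := by
  ext i
  simp [subDim]

lemma subDim_le_dimVec (M : QRep k s t) (U : ∀ i, Submodule k (M.V i)) : M.subDim U ≤ M.dimVec :=
  fun i => Submodule.finrank_le (U i)

/-- The representation on the spaces of `M` with arrow maps `N`; it serves to put two
representations of equal dimension vector on the same spaces. -/
def withHom (M : QRep k s t) (N : ∀ a, M.V (s a) →ₗ[k] M.V (t a)) : QRep k s t where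
  V := M.V
  hom := N

variable [Fintype Q0] {θ η : Q0 → ℝ}

lemma exists_semistable_withHom {M N : QRep k s t} (hMN : M.dimVec = N.dimVec)
    (hN : Semistable θ N) : ∃ N', Semistable θ (M.withHom N') := by
  let e : ∀ i, M.V i ≃ₗ[k] N.V i := fun i => .ofFinrankEq _ _ (congrFun hMN i)
  refine ⟨fun a => (e (t a)).symm ∘ₗ N.hom a ∘ₗ (e (s a) : M.V (s a) →ₗ[k] N.V (s a)), ?_, ?_⟩
  · exact (congrArg (pair θ) hMN).trans hN.1
  · intro U hU
    let U' : ∀ i, Submodule k (N.V i) := fun i => (U i).map (e i : M.V i →ₗ[k] N.V i)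
    have hU' : N.IsSubrep U' := by
      rintro a _ ⟨x, hx, rfl⟩
      exact ⟨_, hU a x hx, (e (t a)).apply_symm_apply _⟩
    have h_dim : N.subDim U' = (M.withHom _).subDim U :=
      funext fun i => LinearEquiv.finrank_map_eq (e i) (U i)
    exact h_dim ▸ hN.2 U' hU'

lemma Semistable.smul_add_smul {M : QRep k s t} (hθ : Semistable θ M) (hη : Semistable η M)
    {a b : ℝ} (ha : 0 ≤ a) (hb : 0 ≤ b) : Semistable (a • θ + b • η) M := by
  refine ⟨by rw [pair_smul_add_smul, hθ.1, hη.1]; simp, fun U hU => ?_⟩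
  rw [pair_smul_add_smul]
  exact add_nonpos (mul_nonpos_of_nonneg_of_nonpos ha (hθ.2 U hU))
    (mul_nonpos_of_nonneg_of_nonpos hb (hη.2 U hU))

end QRep

/-- A one-parameter family of representations: vector spaces `P i` with injective operators `T i` of
finite corank and arrow maps commuting with `T`, as for free `k[T]`-modules of finite rank. Its
special fibre is `P / T P`. -/
structure QFamily (k : Type) [Field k] {Q0 Q1 : Type} (s t : Q1 → Q0) where
  P : Q0 → Type
  [addgrp : ∀ i, AddCommGroup (P i)]
  [mod : ∀ i, Module k (P i)]
  T : ∀ i, P i →ₗ[k] P i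
  X : ∀ a : Q1, P (s a) →ₗ[k] P (t a)
  comm : ∀ a x, X a (T (s a) x) = T (t a) (X a x)
  injective : ∀ i, Injective (T i)
  cofg : ∀ i, (LinearMap.range (T i)).CoFG

attribute [instance] QFamily.addgrp QFamily.mod

namespace QFamily

variable {k : Type} [Field k] {Q0 Q1 : Type} {s t : Q1 → Q0} (S : QFamily k s t)

/-- The family of subspaces `T L`. -/
def shift (L : ∀ i, Submodule k (S.P i)) : ∀ i, Submodule k (S.P i) :=
  fun i => (L i).map (S.T i)

/-- The family of subspaces `T⁻¹ L`. -/
def unshift (L : ∀ i, Submodule k (S.P i)) : ∀ i, Submodule k (S.P i) :=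
  fun i => (L i).comap (S.T i)

/-- A lattice in a family: a subfamily, stable under `T` and under the arrow maps, which contains
`Tⁿ P` for some `n`. -/
structure IsLattice (L : ∀ i, Submodule k (S.P i)) : Prop where
  le_comap_T : ∀ i, L i ≤ (L i).comap (S.T i)
  le_comap_X : ∀ a, L (s a) ≤ (L (t a)).comap (S.X a)
  exists_iterate_shift_le : ∃ n, S.shift^[n] ⊤ ≤ L

/-- The dimension vector of `P / L`. -/
noncomputable def codimVec (L : ∀ i, Submodule k (S.P i)) : Q0 → ℕ :=
  fun i => codim (L i)

/-- The dimension vector of the special fibre `P / T P`. -/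
noncomputable def dimVec : Q0 → ℕ :=
  fun i => codim (LinearMap.range (S.T i))

variable {S} {L L' : ∀ i, Submodule k (S.P i)}

lemma shift_le_iff_le_unshift : S.shift L ≤ L' ↔ L ≤ S.unshift L' :=
  forall_congr' fun _ => Submodule.map_le_iff_le_comap

lemma shift_mono : Monotone S.shift :=
  fun _ _ h i => Submodule.map_mono (h i)

lemma antitone_iterate_shift_top : Antitone fun n => S.shift^[n] ⊤ :=
  shift_mono.antitone_iterate_of_map_le le_top

lemma shift_inf_unshift : S.shift (L ⊓ S.unshift L') = S.shift L ⊓ L' :=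
  funext fun i => SetLike.coe_injective (Set.image_inter_preimage (S.T i) (L i) (L' i))

lemma cofg_iterate_shift_top (n : ℕ) (i : Q0) : (S.shift^[n] ⊤ i).CoFG := by
  induction n with
  | zero => exact Submodule.CoFG.top
  | succ n ih =>
    rw [iterate_succ_apply']
    exact cofg_map ih (S.cofg i)

lemma codimVec_top : S.codimVec ⊤ = 0 :=
  funext fun _ => codim_top

namespace IsLattice

lemma cofg (h : S.IsLattice L) (i : Q0) : (L i).CoFG := by
  obtain ⟨n, hn⟩ := h.exists_iterate_shift_le
  exact (cofg_iterate_shift_top n i).of_le (hn i)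

lemma shift_le (h : S.IsLattice L) : S.shift L ≤ L :=
  shift_le_iff_le_unshift.2 h.le_comap_T

lemma iterate_shift_le (h : S.IsLattice L) (n : ℕ) : S.shift^[n] L ≤ L :=
  shift_mono.antitone_iterate_of_map_le h.shift_le n.zero_le

lemma top : S.IsLattice ⊤ :=
  ⟨fun _ _ _ => trivial, fun _ _ _ => trivial, 0, le_rfl⟩

lemma shift (h : S.IsLattice L) : S.IsLattice (S.shift L) where
  le_comap_T i := by
    rintro _ ⟨x, hx, rfl⟩
    exact ⟨_, h.le_comap_T i hx, rfl⟩
  le_comap_X a := by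
    rintro _ ⟨x, hx, rfl⟩
    exact ⟨_, h.le_comap_X a hx, (S.comm a x).symm⟩
  exists_iterate_shift_le := by
    obtain ⟨n, hn⟩ := h.exists_iterate_shift_le
    exact ⟨n + 1, (iterate_succ_apply' S.shift n ⊤).trans_le (shift_mono hn)⟩

lemma iterate_shift (h : S.IsLattice L) (n : ℕ) : S.IsLattice (S.shift^[n] L) := by
  induction n with
  | zero => exact h
  | succ n ih =>
    rw [iterate_succ_apply']
    exact ih.shift

lemma unshift (h : S.IsLattice L) : S.IsLattice (S.unshift L) where
  le_comap_T i _ hx := h.le_comap_T i hx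
  le_comap_X a x hx := by
    change S.T (t a) (S.X a x) ∈ L (t a)
    rw [← S.comm]
    exact h.le_comap_X a hx
  exists_iterate_shift_le := by
    obtain ⟨n, hn⟩ := h.exists_iterate_shift_le
    exact ⟨n, hn.trans h.le_comap_T⟩

lemma sup (h : S.IsLattice L) (h' : S.IsLattice L') : S.IsLattice (L ⊔ L') where
  le_comap_T i := sup_le ((h.le_comap_T i).trans (Submodule.comap_mono le_sup_left))
    ((h'.le_comap_T i).trans (Submodule.comap_mono le_sup_right))
  le_comap_X a := sup_le ((h.le_comap_X a).trans (Submodule.comap_mono le_sup_left))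
    ((h'.le_comap_X a).trans (Submodule.comap_mono le_sup_right))
  exists_iterate_shift_le := by
    obtain ⟨n, hn⟩ := h.exists_iterate_shift_le
    exact ⟨n, hn.trans le_sup_left⟩

lemma inf (h : S.IsLattice L) (h' : S.IsLattice L') : S.IsLattice (L ⊓ L') where
  le_comap_T i := inf_le_inf (h.le_comap_T i) (h'.le_comap_T i)
  le_comap_X a := inf_le_inf (h.le_comap_X a) (h'.le_comap_X a)
  exists_iterate_shift_le := by
    obtain ⟨n, hn⟩ := h.exists_iterate_shift_le
    obtain ⟨m, hm⟩ := h'.exists_iterate_shift_le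
    exact ⟨max n m, le_inf ((antitone_iterate_shift_top (le_max_left n m)).trans hn)
      ((antitone_iterate_shift_top (le_max_right n m)).trans hm)⟩

lemma codimVec_shift (h : S.IsLattice L) : S.codimVec (S.shift L) = S.dimVec + S.codimVec L :=
  funext fun i => codim_map (h.cofg i) (S.cofg i) (S.injective i)

lemma codimVec_sup_add_codimVec_inf (h : S.IsLattice L) (h' : S.IsLattice L') :
    S.codimVec (L ⊔ L') + S.codimVec (L ⊓ L') = S.codimVec L + S.codimVec L' :=
  funext fun i => codim_sup_add_codim_inf (h.cofg i) (h'.cofg i)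

end IsLattice

section Minimizing

variable [Fintype Q0] {θ : Q0 → ℝ}

variable (S) in
/-- The lattice `L` minimizes `θ(P / L)` among all lattices. -/
def IsMinimizing (θ : Q0 → ℝ) (L : ∀ i, Submodule k (S.P i)) : Prop :=
  ∀ L', S.IsLattice L' → QRep.pair θ (S.codimVec L) ≤ QRep.pair θ (S.codimVec L')

variable (S) in
/-- The lattice `L` minimizes `θ(P / L)` among the lattices between `T L` and `L`, which correspond
to the subrepresentations of `L / T L`. -/
def IsLocallyMinimizing (θ : Q0 → ℝ) (L : ∀ i, Submodule k (S.P i)) : Prop :=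
  ∀ L', S.IsLattice L' → S.shift L ≤ L' → L' ≤ L →
    QRep.pair θ (S.codimVec L) ≤ QRep.pair θ (S.codimVec L')

lemma IsLattice.pair_codimVec_shift (h : S.IsLattice L) (hθ : QRep.pair θ S.dimVec = 0) :
    QRep.pair θ (S.codimVec (S.shift L)) = QRep.pair θ (S.codimVec L) := by
  rw [h.codimVec_shift, QRep.pair_add, hθ, zero_add]

lemma IsLattice.pair_codimVec_iterate_shift (h : S.IsLattice L) (hθ : QRep.pair θ S.dimVec = 0)
    (n : ℕ) : QRep.pair θ (S.codimVec (S.shift^[n] L)) = QRep.pair θ (S.codimVec L) := by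
  induction n with
  | zero => rfl
  | succ n ih => rw [iterate_succ_apply', (h.iterate_shift n).pair_codimVec_shift hθ, ih]

namespace IsLocallyMinimizing

/-- By modularity and shift invariance of `θ(P / -)`, the value at `L'` is determined by those at
`T L ⊔ L'` and `L ⊓ T⁻¹ L'`: the first lattice lies between `T L` and `L`, the second contains
`Tⁿ L` if `L'` contains `Tⁿ⁺¹ L`. -/
lemma pair_codimVec_le_of_iterate_shift_le (hL : S.IsLocallyMinimizing θ L) (h : S.IsLattice L)
    (hθ : QRep.pair θ S.dimVec = 0) (n : ℕ) :
    ∀ {L'}, S.IsLattice L' → L' ≤ L → S.shift^[n] L ≤ L' →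
      QRep.pair θ (S.codimVec L) ≤ QRep.pair θ (S.codimVec L') := by
  induction n with
  | zero =>
    intro L' _ hle hge
    rw [le_antisymm hle hge]
  | succ n ih =>
    intro L' h' hle hge
    rw [iterate_succ_apply', shift_le_iff_le_unshift] at hge
    have h_inf := h.inf h'.unshift
    have h_sup_le := hL _ (h.shift.sup h') le_sup_left (sup_le h.shift_le hle)
    have h_inf_le := ih h_inf inf_le_left (le_inf (h.iterate_shift_le n) hge)
    have h_inf_eq := h_inf.pair_codimVec_shift hθ
    have h_modular := congrArg (QRep.pair θ) (h.shift.codimVec_sup_add_codimVec_inf h')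
    rw [QRep.pair_add, QRep.pair_add, h.pair_codimVec_shift hθ, ← shift_inf_unshift]
      at h_modular
    linarith

lemma isMinimizing (hL : S.IsLocallyMinimizing θ L) (h : S.IsLattice L)
    (hθ : QRep.pair θ S.dimVec = 0) : S.IsMinimizing θ L := by
  intro L' h'
  obtain ⟨m, hm⟩ := h.exists_iterate_shift_le
  have h_shift := h'.iterate_shift m
  obtain ⟨n, hn⟩ := h_shift.exists_iterate_shift_le
  rw [← h'.pair_codimVec_iterate_shift hθ m]
  exact hL.pair_codimVec_le_of_iterate_shift_le h hθ n h_shift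
    ((shift_mono.iterate m le_top).trans hm) ((shift_mono.iterate n le_top).trans hn)

end IsLocallyMinimizing

end Minimizing

variable (S) in
/-- An identification of the representation `R` with the special fibre `L / T L` of `L`, given by
the projections `L i → R.V i`. -/
structure Reduction (L : ∀ i, Submodule k (S.P i)) (R : QRep k s t) where
  proj : ∀ i, L i →ₗ[k] R.V i
  surjective : ∀ i, Surjective (proj i)
  ker_proj : ∀ i, LinearMap.ker (proj i) = (S.shift L i).comap (L i).subtype
  proj_X : ∀ a (x : L (s a)) (hx : S.X a x ∈ L (t a)),
    proj (t a) ⟨S.X a x, hx⟩ = R.hom a (proj (s a) x)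

namespace Reduction

variable {R : QRep k s t} (ρ : S.Reduction L R)

/-- The preimage in `L` of a family of subspaces of its special fibre. -/
def lift (W : ∀ i, Submodule k (R.V i)) : ∀ i, Submodule k (S.P i) :=
  fun i => ((W i).comap (ρ.proj i)).map (L i).subtype

lemma lift_le (W : ∀ i, Submodule k (R.V i)) : ρ.lift W ≤ L :=
  fun i => Submodule.map_subtype_le (L i) _

lemma lift_mono : Monotone ρ.lift :=
  fun _ _ h i => Submodule.map_mono (Submodule.comap_mono (h i))

lemma lift_bot (h : S.IsLattice L) : ρ.lift ⊥ = S.shift L := by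
  funext i
  change ((⊥ : Submodule k (R.V i)).comap (ρ.proj i)).map (L i).subtype = _
  rw [Submodule.comap_bot, ρ.ker_proj, Submodule.map_comap_subtype]
  exact inf_eq_right.2 (h.shift_le i)

lemma shift_le_lift (h : S.IsLattice L) (W : ∀ i, Submodule k (R.V i)) :
    S.shift L ≤ ρ.lift W :=
  (ρ.lift_bot h).ge.trans (ρ.lift_mono bot_le)

lemma isLattice_lift (h : S.IsLattice L) {W : ∀ i, Submodule k (R.V i)} (hW : R.IsSubrep W) :
    S.IsLattice (ρ.lift W) where
  le_comap_T := shift_le_iff_le_unshift.1 <|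
    (shift_mono (ρ.lift_le W)).trans (ρ.shift_le_lift h W)
  le_comap_X a := by
    rintro _ ⟨x, hx, rfl⟩
    refine ⟨⟨S.X a x, h.le_comap_X a x.2⟩, ?_, rfl⟩
    change ρ.proj (t a) _ ∈ W (t a)
    rw [ρ.proj_X]
    exact hW a _ hx
  exists_iterate_shift_le := by
    obtain ⟨n, hn⟩ := h.shift.exists_iterate_shift_le
    exact ⟨n, hn.trans (ρ.shift_le_lift h W)⟩

lemma exists_isSubrep_lift_eq (h' : S.IsLattice L') (h_shift : S.shift L ≤ L') (h_le : L' ≤ L) :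
    ∃ W, R.IsSubrep W ∧ ρ.lift W = L' := by
  refine ⟨fun i => ((L' i).comap (L i).subtype).map (ρ.proj i), ?_, ?_⟩
  · rintro a _ ⟨x, hx, rfl⟩
    have hX : S.X a x ∈ L' (t a) := h'.le_comap_X a hx
    exact ⟨⟨S.X a x, h_le (t a) hX⟩, hX, ρ.proj_X a x _⟩
  · funext i
    have h_ker : LinearMap.ker (ρ.proj i) ≤ (L' i).comap (L i).subtype := by
      rw [ρ.ker_proj]
      exact Submodule.comap_mono (h_shift i)
    rw [lift, Submodule.comap_map_eq, sup_eq_left.2 h_ker, Submodule.map_comap_subtype]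
    exact inf_eq_right.2 (h_le i)

lemma codimVec_lift_add_subDim (h : S.IsLattice L) (W : ∀ i, Submodule k (R.V i)) :
    S.codimVec (ρ.lift W) + R.subDim W = S.codimVec L + R.dimVec :=
  funext fun i => codim_map_subtype_comap_add_finrank (h.cofg i) (ρ.surjective i) (W i)

include ρ in
lemma dimVec_eq (h : S.IsLattice L) : R.dimVec = S.dimVec := by
  have h_bot := ρ.codimVec_lift_add_subDim h ⊥
  rw [ρ.lift_bot h, h.codimVec_shift, R.subDim_bot, add_zero, add_comm] at h_bot
  exact (add_left_cancel h_bot).symm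

variable [Fintype Q0] {θ : Q0 → ℝ}

lemma pair_codimVec_lift (h : S.IsLattice L) (hθ : QRep.pair θ S.dimVec = 0)
    (W : ∀ i, Submodule k (R.V i)) :
    QRep.pair θ (S.codimVec (ρ.lift W)) =
      QRep.pair θ (S.codimVec L) - QRep.pair θ (R.subDim W) := by
  have h_dim := congrArg (QRep.pair θ) (ρ.codimVec_lift_add_subDim h W)
  rw [QRep.pair_add, QRep.pair_add, ρ.dimVec_eq h, hθ] at h_dim
  linarith

include ρ

lemma semistable_iff_isLocallyMinimizing (h : S.IsLattice L) (hθ : QRep.pair θ S.dimVec = 0) :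
    QRep.Semistable θ R ↔ S.IsLocallyMinimizing θ L := by
  constructor
  · rintro ⟨-, hR⟩ L' h' h_shift h_le
    obtain ⟨W, hW, rfl⟩ := ρ.exists_isSubrep_lift_eq h' h_shift h_le
    linarith [ρ.pair_codimVec_lift h hθ W, hR W hW]
  · refine fun hL => ⟨ρ.dimVec_eq h ▸ hθ, fun W hW => ?_⟩
    linarith [ρ.pair_codimVec_lift h hθ W,
      hL _ (ρ.isLattice_lift h hW) (ρ.shift_le_lift h W) (ρ.lift_le W)]

theorem semistable_iff_isMinimizing (h : S.IsLattice L) (hθ : QRep.pair θ S.dimVec = 0) :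
    QRep.Semistable θ R ↔ S.IsMinimizing θ L :=
  (ρ.semistable_iff_isLocallyMinimizing h hθ).trans
    ⟨fun hL => hL.isMinimizing h hθ, fun hL L' h' _ _ => hL L' h'⟩

end Reduction

lemma IsLattice.exists_reduction (h : S.IsLattice L) : ∃ R, Nonempty (S.Reduction L R) := by
  let N : ∀ i, Submodule k (L i) := fun i => (S.shift L i).comap (L i).subtype
  have hN : ∀ i, (N i).CoFG := fun i => cofg_comap (h.shift.cofg i) _
  let R : QRep k s t :=
    { V := fun i => L i ⧸ N i
      hom := fun a => (N (s a)).mapQ (N (t a)) ((S.X a).restrict (h.le_comap_X a))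
        fun _ hx => h.shift.le_comap_X a hx }
  exact ⟨R, ⟨fun i => (N i).mkQ, fun i => (N i).mkQ_surjective, fun i => (N i).ker_mkQ,
    fun _ _ _ => rfl⟩⟩

end QFamily

section Polynomials

variable {K V V' : Type*} [DivisionRing K] [AddCommGroup V] [Module K V]
  [AddCommGroup V'] [Module K V']

variable (K V) in
/-- Multiplication by the variable on polynomials with coefficients in `V`, which are encoded as
finitely supported functions `ℕ →₀ V`. -/
noncomputable def mulVar : (ℕ →₀ V) →ₗ[K] (ℕ →₀ V) := Finsupp.lmapDomain V K Nat.succ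

lemma mulVar_single (n : ℕ) (v : V) :
    mulVar K V (Finsupp.single n v) = Finsupp.single (n + 1) v :=
  Finsupp.mapDomain_single

lemma mulVar_injective : Injective (mulVar K V) :=
  Finsupp.mapDomain_injective Nat.succ_injective

lemma range_mulVar :
    LinearMap.range (mulVar K V) = LinearMap.ker (Finsupp.lapply 0 : (ℕ →₀ V) →ₗ[K] V) := by
  ext x
  constructor
  · rintro ⟨y, rfl⟩
    exact Finsupp.mapDomain_of_notMem_range _ _ (by simp)
  · intro hx
    refine ⟨x.comapDomain Nat.succ Nat.succ_injective.injOn,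
      Finsupp.mapDomain_comapDomain _ Nat.succ_injective _ ?_⟩
    rintro (_ | n) hn
    · exact absurd hx (Finsupp.mem_support_iff.1 hn)
    · exact ⟨n, rfl⟩

/-- The space `L + V[T]_{< c}` of polynomials that agree with an element of `L` from degree `c`
on. -/
noncomputable def addLowDegree (L : Submodule K (ℕ →₀ V)) (c : ℕ) : Submodule K (ℕ →₀ V) :=
  L ⊔ ⨆ m < c, LinearMap.range (Finsupp.lsingle m)

/-- The space of coefficients in degree `c` of the elements of `L` of degree at most `c`. -/
noncomputable def leadCoeff (L : Submodule K (ℕ →₀ V)) (c : ℕ) : Submodule K V :=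
  (addLowDegree L c).comap (Finsupp.lsingle c)

lemma single_mem_addLowDegree (L : Submodule K (ℕ →₀ V)) {m c : ℕ} (h : m < c) (v : V) :
    Finsupp.single m v ∈ addLowDegree L c :=
  le_sup_of_le_right (le_iSup₂ (f := fun m (_ : m < c) => LinearMap.range (Finsupp.lsingle m)) m h)
    ⟨v, rfl⟩

lemma addLowDegree_zero (L : Submodule K (ℕ →₀ V)) : addLowDegree L 0 = L := by
  simp [addLowDegree]

lemma addLowDegree_succ (L : Submodule K (ℕ →₀ V)) (c : ℕ) :
    addLowDegree L (c + 1) = addLowDegree L c ⊔ LinearMap.range (Finsupp.lsingle c) := by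
  rw [addLowDegree, addLowDegree, Nat.iSup_lt_succ, sup_assoc]

lemma addLowDegree_eq_top {L : Submodule K (ℕ →₀ V)} {n : ℕ}
    (hL : ∀ m ≥ n, ∀ v, Finsupp.single m v ∈ L) : addLowDegree L n = ⊤ := by
  refine eq_top_iff.2 fun x _ => ?_
  induction x using Finsupp.induction_linear with
  | zero => exact zero_mem _
  | add x y hx hy => exact add_mem (hx trivial) (hy trivial)
  | single m v =>
    rcases lt_or_ge m n with h | h
    · exact single_mem_addLowDegree L h v
    · exact Submodule.mem_sup_left (hL m h v)

lemma addLowDegree_le_comap {L : Submodule K (ℕ →₀ V)} {L' : Submodule K (ℕ →₀ V')}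
    {g : (ℕ →₀ V) →ₗ[K] (ℕ →₀ V')} (hL : L ≤ L'.comap g) {c c' : ℕ}
    (hg : ∀ m < c, ∀ v, g (Finsupp.single m v) ∈ addLowDegree L' c') :
    addLowDegree L c ≤ (addLowDegree L' c').comap g :=
  sup_le (hL.trans (Submodule.comap_mono le_sup_left)) <| iSup₂_le fun m hm => by
    rintro _ ⟨v, rfl⟩
    exact hg m hm v

lemma leadCoeff_mono {L : Submodule K (ℕ →₀ V)} (hL : L ≤ L.comap (mulVar K V)) :
    Monotone (leadCoeff L) := by
  refine monotone_nat_of_le_succ fun c v hv => ?_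
  have h_mul : addLowDegree L c ≤ (addLowDegree L (c + 1)).comap (mulVar K V) :=
    addLowDegree_le_comap hL fun m hm w => by
      rw [mulVar_single]
      exact single_mem_addLowDegree L (Nat.succ_lt_succ hm) w
  have h_single := h_mul hv
  rwa [Submodule.mem_comap, Finsupp.lsingle_apply, mulVar_single] at h_single

lemma codim_addLowDegree_add_sum_codim_leadCoeff {L : Submodule K (ℕ →₀ V)} (hL : L.CoFG) (n : ℕ) :
    codim (addLowDegree L n) + ∑ c ∈ Finset.range n, codim (leadCoeff L c) = codim L := by
  induction n with
  | zero => rw [addLowDegree_zero, Finset.sum_range_zero, add_zero]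
  | succ n ih =>
    have h_step := codim_sup_range_add_codim_comap (hL.of_le le_sup_left : (addLowDegree L n).CoFG)
      (Finsupp.lsingle n)
    rw [← addLowDegree_succ] at h_step
    rw [Finset.sum_range_succ, ← ih, ← h_step, leadCoeff]
    ring

end Polynomials

namespace QFamily

section Pencil

variable {k : Type} [Field k] {Q0 Q1 : Type} {s t : Q1 → Q0} (M : QRep k s t)
  (N : ∀ a, M.V (s a) →ₗ[k] M.V (t a))

/-- The arrow maps `M + T N` on polynomials with coefficients in `M`. -/
noncomputable def pencilHom (a : Q1) : (ℕ →₀ M.V (s a)) →ₗ[k] (ℕ →₀ M.V (t a)) :=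
  Finsupp.mapRange.linearMap (M.hom a) +
    mulVar k (M.V (t a)) ∘ₗ Finsupp.mapRange.linearMap (N a)

lemma pencilHom_single (a : Q1) (n : ℕ) (v : M.V (s a)) :
    pencilHom M N a (Finsupp.single n v) =
      Finsupp.single n (M.hom a v) + Finsupp.single (n + 1) (N a v) := by
  simp [pencilHom, mulVar_single]

lemma pencilHom_mulVar (a : Q1) (x : ℕ →₀ M.V (s a)) :
    pencilHom M N a (mulVar k _ x) = mulVar k _ (pencilHom M N a x) := by
  induction x using Finsupp.induction_linear with
  | zero => simp only [map_zero]
  | add x y hx hy => simp only [map_add, hx, hy]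
  | single n v => simp only [mulVar_single, pencilHom_single, map_add]

lemma pencilHom_apply_zero (a : Q1) (x : ℕ →₀ M.V (s a)) :
    pencilHom M N a x 0 = M.hom a (x 0) := by
  have h_mul : mulVar k _ (Finsupp.mapRange.linearMap (N a) x) 0 = 0 := range_mulVar.le ⟨_, rfl⟩
  simpa [pencilHom] using h_mul

/-- The pencil `M + T N`, with special fibre `M`. -/
noncomputable def pencil : QFamily k s t where
  P i := ℕ →₀ M.V i
  T i := mulVar k (M.V i)
  X := pencilHom M N
  comm := pencilHom_mulVar M N
  injective _ := mulVar_injective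
  cofg i := by
    rw [range_mulVar]
    exact Submodule.CoFG.ker _

/-- The special fibre of a pencil is its constant term. -/
noncomputable def pencilReduction : (pencil M N).Reduction ⊤ M where
  proj i := (Finsupp.lapply 0 : (ℕ →₀ M.V i) →ₗ[k] M.V i) ∘ₗ Submodule.subtype ⊤
  surjective i v := ⟨⟨Finsupp.single 0 v, trivial⟩, Finsupp.single_eq_same⟩
  ker_proj i := by
    change _ = ((⊤ : Submodule k (ℕ →₀ M.V i)).map (mulVar k (M.V i))).comap (Submodule.subtype ⊤)
    rw [Submodule.map_top, range_mulVar]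
    rfl
  proj_X a x _ := pencilHom_apply_zero M N a x.1

lemma dimVec_pencil : (pencil M N).dimVec = M.dimVec :=
  ((pencilReduction M N).dimVec_eq .top).symm

lemma single_mem_iterate_shift_top (i : Q0) (n : ℕ) :
    ∀ m ≥ n, ∀ v : M.V i, Finsupp.single m v ∈ (pencil M N).shift^[n] ⊤ i := by
  induction n with
  | zero => exact fun _ _ _ => trivial
  | succ n ih =>
    rintro (_ | m) hm v
    · exact absurd hm (Nat.not_succ_le_zero n)
    · rw [iterate_succ_apply']
      exact ⟨Finsupp.single m v, ih m (Nat.le_of_succ_le_succ hm) v, mulVar_single m v⟩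

variable {M N}

lemma map_mem_leadCoeff {L : ∀ i, Submodule k (ℕ →₀ M.V i)} (hL : (pencil M N).IsLattice L)
    (a : Q1) (c : ℕ) {v : M.V (s a)} (hv : v ∈ leadCoeff (L (s a)) c) :
    N a v ∈ leadCoeff (L (t a)) (c + 1) := by
  have h_hom : addLowDegree (L (s a)) c ≤
      (addLowDegree (L (t a)) (c + 1)).comap (pencilHom M N a) :=
    addLowDegree_le_comap (g := pencilHom M N a) (hL.le_comap_X a) fun m hm w => by
      rw [pencilHom_single]
      exact add_mem (single_mem_addLowDegree _ (hm.trans c.lt_succ_self) _)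
        (single_mem_addLowDegree _ (Nat.succ_lt_succ hm) _)
  have h_single := h_hom hv
  rw [Submodule.mem_comap, Finsupp.lsingle_apply, pencilHom_single] at h_single
  exact (Submodule.add_mem_iff_right _ (single_mem_addLowDegree _ c.lt_succ_self _)).1 h_single

/-- The dimension vector of the quotient of `M` by the leading coefficients of `L` in degree `c`. -/
noncomputable def leadCodimVec (L : ∀ i, Submodule k (ℕ →₀ M.V i)) (c : ℕ) : Q0 → ℕ :=
  fun i => codim (leadCoeff (L i) c)

lemma leadCodimVec_add_subDim (L : ∀ i, Submodule k (ℕ →₀ M.V i)) (c : ℕ) :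
    leadCodimVec L c + M.subDim (fun i => leadCoeff (L i) c) = M.dimVec :=
  funext fun i => codim_add_finrank (leadCoeff (L i) c)

lemma leadCodimVec_le (L : ∀ i, Submodule k (ℕ →₀ M.V i)) (c : ℕ) :
    leadCodimVec L c ≤ M.dimVec :=
  le_self_add.trans (leadCodimVec_add_subDim L c).le

lemma antitone_leadCodimVec {L : ∀ i, Submodule k (ℕ →₀ M.V i)} (hL : (pencil M N).IsLattice L) :
    Antitone (leadCodimVec L) := by
  intro c c' hc i
  have h_mono := Submodule.finrank_mono (leadCoeff_mono (hL.le_comap_T i) hc)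
  have h_c := codim_add_finrank (leadCoeff (L i) c)
  have h_c' := codim_add_finrank (leadCoeff (L i) c')
  simp only [leadCodimVec]
  omega

lemma isSubrep_leadCoeff {L : ∀ i, Submodule k (ℕ →₀ M.V i)} (hL : (pencil M N).IsLattice L)
    {c : ℕ} (hc : leadCodimVec L c = leadCodimVec L (c + 1)) :
    (M.withHom N).IsSubrep fun i => leadCoeff (L i) c := by
  have h_eq : ∀ i, leadCoeff (L i) c = leadCoeff (L i) (c + 1) := fun i => by
    refine Submodule.eq_of_le_of_finrank_eq (leadCoeff_mono (hL.le_comap_T i) c.le_succ) ?_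
    have h_codim : codim (leadCoeff (L i) c) = codim (leadCoeff (L i) (c + 1)) := congrFun hc i
    have h_c := codim_add_finrank (leadCoeff (L i) c)
    have h_c' := codim_add_finrank (leadCoeff (L i) (c + 1))
    omega
  intro a v hv
  change N a v ∈ leadCoeff (L (t a)) c
  rw [h_eq]
  exact map_mem_leadCoeff hL a c hv

lemma exists_codimVec_eq_sum {L : ∀ i, Submodule k (ℕ →₀ M.V i)} (hL : (pencil M N).IsLattice L) :
    ∃ n, (pencil M N).codimVec L = ∑ c ∈ Finset.range n, leadCodimVec L c := by
  obtain ⟨n, hn⟩ := hL.exists_iterate_shift_le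
  refine ⟨n, funext fun i => ?_⟩
  have h_top : addLowDegree (L i) n = ⊤ :=
    addLowDegree_eq_top fun m hm v => hn i (single_mem_iterate_shift_top M N i n m hm v)
  have h_sum := codim_addLowDegree_add_sum_codim_leadCoeff (hL.cofg i) n
  rw [h_top, codim_top, zero_add] at h_sum
  rw [Finset.sum_apply]
  exact h_sum.symm

variable [Fintype Q0] {θ : Q0 → ℝ}

lemma pair_leadCodimVec_nonneg (hN : QRep.Semistable θ (M.withHom N))
    {L : ∀ i, Submodule k (ℕ →₀ M.V i)} (hL : (pencil M N).IsLattice L) {c : ℕ}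
    (hc : leadCodimVec L c = leadCodimVec L (c + 1)) : 0 ≤ QRep.pair θ (leadCodimVec L c) := by
  have h_sub : QRep.pair θ (M.subDim fun i => leadCoeff (L i) c) ≤ 0 :=
    hN.2 _ (isSubrep_leadCoeff hL hc)
  have h_dim : QRep.pair θ M.dimVec = 0 := hN.1
  rw [← leadCodimVec_add_subDim L c, QRep.pair_add] at h_dim
  linarith

theorem exists_isMinimizing_pencil (hN : QRep.Semistable θ (M.withHom N)) :
    ∃ L, (pencil M N).IsLattice L ∧ (pencil M N).IsMinimizing θ L := by
  classical
  have h_finite : (Set.Iic M.dimVec).Finite :=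
    (OrderBot.bddBelow (Set.Iic M.dimVec)).finite_of_bddAbove bddAbove_Iic
  have h_pwo : ((fun L => QRep.pair θ ((pencil M N).codimVec L)) ''
      {L | (pencil M N).IsLattice L}).IsPWO := by
    refine (isPWO_setOf_sum_antitone h_finite (QRep.pair θ)).mono ?_
    rintro _ ⟨L, hL, rfl⟩
    obtain ⟨n, hn⟩ := exists_codimVec_eq_sum hL
    exact ⟨n, leadCodimVec L, antitone_leadCodimVec hL, leadCodimVec_le L,
      fun c => pair_leadCodimVec_nonneg hN hL, by simp only [hn, QRep.pair_sum]⟩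
  obtain ⟨L, hL, h_min⟩ := h_pwo.exists_minimalFor _ _ ⟨⊤, .top⟩
  exact ⟨L, hL, fun L' h' => (le_total _ _).elim id (h_min h')⟩

end Pencil

end QFamily

section WallCrossing

variable {k : Type} [Field k] {Q0 Q1 : Type} [Fintype Q0] {s t : Q1 → Q0} {d : Q0 → ℕ}
  {θ η : Q0 → ℝ}

namespace QRep

lemma semistable_iff_isMinimizing_pencil (hθ : pair θ d = 0) {M : QRep k s t} (hM : M.dimVec = d)
    (N : ∀ a, M.V (s a) →ₗ[k] M.V (t a)) :
    Semistable θ M ↔ (QFamily.pencil M N).IsMinimizing θ ⊤ :=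
  (QFamily.pencilReduction M N).semistable_iff_isMinimizing .top <| by
    rw [QFamily.dimVec_pencil, hM, hθ]

end QRep

namespace GITEquiv

open QFamily

lemma symm (h : GITEquiv k s t d θ η) : GITEquiv k s t d η θ :=
  fun M hM => (h M hM).symm

lemma isMinimizing_iff (h : GITEquiv k s t d θ η) (hθ : QRep.pair θ d = 0)
    (hη : QRep.pair η d = 0) {S : QFamily k s t} (hS : S.dimVec = d)
    {L : ∀ i, Submodule k (S.P i)} (hL : S.IsLattice L) :
    S.IsMinimizing θ L ↔ S.IsMinimizing η L := by
  subst hS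
  obtain ⟨R, ⟨ρ⟩⟩ := hL.exists_reduction
  rw [← ρ.semistable_iff_isMinimizing hL hθ, ← ρ.semistable_iff_isMinimizing hL hη]
  exact h R (ρ.dimVec_eq hL)

/-- A `θ`-minimizing lattice `L` of a pencil from `M` to a `θ`-semistable representation is also
`η`-minimizing, so neither `θ(P / L)` nor `η(P / L)` is positive; as `M` is semistable for a point
between, `θ(P / L)` vanishes. -/
lemma semistable_of_smul_add_smul (h : GITEquiv k s t d θ η) (hθ : θ ∈ SstCone k s t d)
    (hη : QRep.pair η d = 0) {a b : ℝ} (ha : 0 < a) (hb : 0 ≤ b) {M : QRep k s t}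
    (hM : M.dimVec = d) (hζM : QRep.Semistable (a • θ + b • η) M) : QRep.Semistable θ M := by
  obtain ⟨hθd, N₀, hN₀, hθN₀⟩ := hθ
  obtain ⟨N, hN⟩ := QRep.exists_semistable_withHom (hM.trans hN₀.symm) hθN₀
  obtain ⟨L, hL, hθL⟩ := exists_isMinimizing_pencil hN
  have hηL := (h.isMinimizing_iff hθd hη ((dimVec_pencil M N).trans hM) hL).1 hθL
  have hζd : QRep.pair (a • θ + b • η) d = 0 := hM ▸ hζM.1
  have hζ_top := (QRep.semistable_iff_isMinimizing_pencil hζd hM N).1 hζM L hL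
  have hθ_top := hθL ⊤ .top
  have hη_top := hηL ⊤ .top
  simp only [codimVec_top, QRep.pair_zero] at hζ_top hθ_top hη_top
  rw [QRep.pair_smul_add_smul] at hζ_top
  have hθL_zero : QRep.pair θ ((pencil M N).codimVec L) = 0 := by
    refine le_antisymm hθ_top (le_of_mul_le_mul_left ?_ ha)
    linarith [mul_nonpos_of_nonneg_of_nonpos hb hη_top]
  refine (QRep.semistable_iff_isMinimizing_pencil hθd hM N).2 fun L' hL' => ?_
  rw [codimVec_top, QRep.pair_zero, ← hθL_zero]
  exact hθL L' hL'

lemma semistable_of_mem_segment (h : GITEquiv k s t d θ η) (hθ : θ ∈ SstCone k s t d)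
    (hη : QRep.pair η d = 0) {ζ : Q0 → ℝ} (hζ : ζ ∈ segment ℝ θ η) {M : QRep k s t}
    (hM : M.dimVec = d) (hζM : QRep.Semistable ζ M) : QRep.Semistable θ M := by
  obtain ⟨a, b, ha, hb, hab, rfl⟩ := hζ
  rcases ha.eq_or_lt with rfl | ha
  · obtain rfl : b = 1 := by rwa [zero_add] at hab
    rw [zero_smul, zero_add, one_smul] at hζM
    exact (h M hM).2 hζM
  · exact h.semistable_of_smul_add_smul hθ hη ha hb hM hζM

/-- In the trivial family with fibre `M`, the preimage of `U` is a second `θ`-minimizing lattice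
besides `⊤`, hence `η`-minimizing. -/
lemma pair_subDim_eq_zero (h : GITEquiv k s t d θ η) {M : QRep k s t} (hM : M.dimVec = d)
    (hθM : QRep.Semistable θ M) {U : ∀ i, Submodule k (M.V i)} (hU : M.IsSubrep U)
    (hθU : QRep.pair θ (M.subDim U) = 0) : QRep.pair η (M.subDim U) = 0 := by
  have hηM := (h M hM).1 hθM
  have hθd : QRep.pair θ d = 0 := hM ▸ hθM.1
  have hηd : QRep.pair η d = 0 := hM ▸ hηM.1
  let ρ := pencilReduction M 0
  have hS : (pencil M 0).dimVec = d := (dimVec_pencil M 0).trans hM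
  have hθ_lift := ρ.pair_codimVec_lift .top (hS.symm ▸ hθd) U
  have hη_lift := ρ.pair_codimVec_lift .top (hS.symm ▸ hηd) U
  rw [codimVec_top, QRep.pair_zero] at hθ_lift hη_lift
  have h_lift : (pencil M 0).IsLattice (ρ.lift U) := ρ.isLattice_lift .top hU
  have hθ_min : (pencil M 0).IsMinimizing θ (ρ.lift U) := fun L' hL' => by
    have hθ_top := (QRep.semistable_iff_isMinimizing_pencil hθd hM 0).1 hθM L' hL'
    rw [codimVec_top, QRep.pair_zero] at hθ_top
    rwa [hθ_lift, hθU, sub_zero]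
  have hη_le := (h.isMinimizing_iff hθd hηd hS h_lift).1 hθ_min ⊤ .top
  rw [hη_lift, codimVec_top, QRep.pair_zero] at hη_le
  exact le_antisymm (hηM.2 U hU) (by linarith)

lemma pair_subDim_eq_zero_of_mem_segment (h : GITEquiv k s t d θ η) {M : QRep k s t}
    (hM : M.dimVec = d) (hθM : QRep.Semistable θ M) {U : ∀ i, Submodule k (M.V i)}
    (hU : M.IsSubrep U) {ζ : Q0 → ℝ} (hζ : ζ ∈ segment ℝ θ η)
    (hζU : QRep.pair ζ (M.subDim U) = 0) :
    QRep.pair θ (M.subDim U) = 0 ∧ QRep.pair η (M.subDim U) = 0 := by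
  have hηM := (h M hM).1 hθM
  obtain ⟨a, b, ha, hb, hab, rfl⟩ := hζ
  rw [QRep.pair_smul_add_smul] at hζU
  have hθU_nonpos := mul_nonpos_of_nonneg_of_nonpos ha (hθM.2 U hU)
  have hηU_nonpos := mul_nonpos_of_nonneg_of_nonpos hb (hηM.2 U hU)
  rcases ha.eq_or_lt with rfl | ha
  · obtain rfl : b = 1 := by rwa [zero_add] at hab
    have hηU : QRep.pair η (M.subDim U) = 0 := by rwa [zero_mul, zero_add, one_mul] at hζU
    exact ⟨h.symm.pair_subDim_eq_zero hM hηM hU hηU, hηU⟩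
  · have hθU : QRep.pair θ (M.subDim U) = 0 := (mul_eq_zero.1 (by linarith)).resolve_left ha.ne'
    exact ⟨hθU, h.pair_subDim_eq_zero hM hθM hU hθU⟩

lemma segment_subset_wall (h : GITEquiv k s t d θ η) (hθ : θ ∈ SstCone k s t d)
    (hη : QRep.pair η d = 0) {e : Q0 → ℕ} {ζ : Q0 → ℝ} (hζ : ζ ∈ segment ℝ θ η)
    (hζe : ζ ∈ Wall k s t d e) : segment ℝ θ η ⊆ Wall k s t d e := by
  obtain ⟨-, hζU, M, U, hM, hU, rfl, hζM⟩ := hζe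
  have hθM := h.semistable_of_mem_segment hθ hη hζ hM hζM
  have hηM := (h M hM).1 hθM
  obtain ⟨hθU, hηU⟩ := h.pair_subDim_eq_zero_of_mem_segment hM hθM hU hζ hζU
  rintro _ ⟨a, b, ha, hb, -, rfl⟩
  have hM' : QRep.Semistable (a • θ + b • η) M := hθM.smul_add_smul hηM ha hb
  have h_pair : QRep.pair (a • θ + b • η) (M.subDim U) = 0 := by
    rw [QRep.pair_smul_add_smul, hθU, hηU, mul_zero, mul_zero, add_zero]
  exact ⟨hM ▸ hM'.1, h_pair, M, U, hM, hU, rfl, hM'⟩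

end GITEquiv

lemma one_sub_mul_add_mul_nonpos {τ x y : ℝ} (hτ_nonneg : 0 ≤ τ) (hτ_le_one : τ ≤ 1) (hx : x ≤ 0)
    (hτ : 0 < y → τ ≤ -x / (y - x)) : (1 - τ) * x + τ * y ≤ 0 := by
  rcases le_or_gt y 0 with hy | hy
  · exact add_nonpos (mul_nonpos_of_nonneg_of_nonpos (sub_nonneg.2 hτ_le_one) hx)
      (mul_nonpos_of_nonneg_of_nonpos hτ_nonneg hy)
  · linarith [(le_div_iff₀ (by linarith : 0 < y - x)).1 (hτ hy)]

/-- The last point of the segment from `θ` to `η` at which `M` is semistable is found by taking,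
among the subdimension vectors with positive `η`-value, one whose value changes sign first. -/
lemma QRep.Semistable.exists_mem_segment_pair_subDim_pos {M : QRep k s t} (hθ : Semistable θ M)
    (hη : ¬ Semistable η M) (hηd : pair η M.dimVec = 0) :
    ∃ ζ ∈ segment ℝ θ η, Semistable ζ M ∧ ∃ U, M.IsSubrep U ∧
      pair ζ (M.subDim U) = 0 ∧ 0 < pair η (M.subDim U) := by
  classical
  let E : Set (Q0 → ℕ) := {e | ∃ U, M.IsSubrep U ∧ M.subDim U = e ∧ 0 < pair η e}
  have hE_finite : E.Finite := by
    refine (OrderBot.bddBelow E).finite_of_bddAbove ⟨M.dimVec, ?_⟩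
    rintro _ ⟨U, -, rfl, -⟩
    exact M.subDim_le_dimVec U
  have hE_nonempty : E.Nonempty := by
    by_contra! hE
    refine hη ⟨hηd, fun U hU => not_lt.1 fun hηU => ?_⟩
    exact hE.subset ⟨U, hU, rfl, hηU⟩
  let time (e : Q0 → ℕ) : ℝ := -pair θ e / (pair η e - pair θ e)
  obtain ⟨_, ⟨U, hU, rfl, hηU⟩, h_min⟩ := Set.exists_min_image E time hE_finite hE_nonempty
  have hθU := hθ.2 U hU
  have h_pos : 0 < pair η (M.subDim U) - pair θ (M.subDim U) := by linarith
  set τ := time (M.subDim U)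
  have hτ_nonneg : 0 ≤ τ := div_nonneg (neg_nonneg.2 hθU) h_pos.le
  have hτ_le_one : τ ≤ 1 := (div_le_one h_pos).2 (by linarith)
  have hτ : τ * (pair η (M.subDim U) - pair θ (M.subDim U)) = -pair θ (M.subDim U) :=
    div_mul_cancel₀ _ h_pos.ne'
  refine ⟨(1 - τ) • θ + τ • η, ⟨1 - τ, τ, by linarith, hτ_nonneg, by ring, rfl⟩,
    ⟨by rw [pair_smul_add_smul, hθ.1, hηd]; ring, fun W hW => ?_⟩, U, hU, ?_, hηU⟩
  · rw [pair_smul_add_smul]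
    exact one_sub_mul_add_mul_nonpos hτ_nonneg hτ_le_one (hθ.2 W hW) fun hηW =>
      h_min _ ⟨W, hW, rfl, hηW⟩
  · rw [pair_smul_add_smul]
    linarith

theorem semistable_of_segment_subset_or_inter_eq_empty (hη : QRep.pair η d = 0)
    (h_wall : ∀ e : Q0 → ℕ, e ≤ d → e ≠ 0 → e ≠ d →
      segment ℝ θ η ⊆ Wall k s t d e ∨ segment ℝ θ η ∩ Wall k s t d e = ∅)
    {M : QRep k s t} (hM : M.dimVec = d) (hθM : QRep.Semistable θ M) : QRep.Semistable η M := by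
  subst hM
  by_contra hηM
  obtain ⟨ζ, hζ, hζM, U, hU, hζU, hηU⟩ := hθM.exists_mem_segment_pair_subDim_pos hηM hη
  have hζ_wall : ζ ∈ Wall k s t M.dimVec (M.subDim U) :=
    ⟨hζM.1, hζU, M, U, rfl, hU, rfl, hζM⟩
  have hU_zero : M.subDim U ≠ 0 := fun h => by simp [h, QRep.pair_zero] at hηU
  have hU_dimVec : M.subDim U ≠ M.dimVec := fun h => by simp [h, hη] at hηU
  rcases h_wall _ (M.subDim_le_dimVec U) hU_zero hU_dimVec with h_subset | h_disjoint
  · exact hηU.ne' (h_subset (right_mem_segment ℝ θ η)).2.1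
  · exact h_disjoint.subset ⟨hζ, hζ_wall⟩

end WallCrossing

theorem stmt11_general (k : Type) [Field k] {Q0 Q1 : Type} [Fintype Q0] (s t : Q1 → Q0)
    (d : Q0 → ℕ) (θ η : Q0 → ℝ) (hθ : θ ∈ SstCone k s t d) (hη : QRep.pair η d = 0) :
    GITEquiv k s t d θ η ↔
      ∀ e : Q0 → ℕ, e ≤ d → e ≠ 0 → e ≠ d →
        segment ℝ θ η ⊆ Wall k s t d e ∨ segment ℝ θ η ∩ Wall k s t d e = ∅ := by
  constructor
  · intro h e _ _ _
    refine (Set.eq_empty_or_nonempty (segment ℝ θ η ∩ Wall k s t d e)).symm.imp_left ?_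
    rintro ⟨ζ, hζ, hζe⟩
    exact h.segment_subset_wall hθ hη hζ hζe
  · refine fun h M hM => ⟨semistable_of_segment_subset_or_inter_eq_empty hη h hM, ?_⟩
    simp only [segment_symm ℝ θ η] at h
    exact semistable_of_segment_subset_or_inter_eq_empty hθ.1 h hM

/-- `θ, η` in the semistable cone of `d` are GIT equivalent iff for every
nonzero proper subdimension vector `e` of `d`, the segment `[θ, η]` is contained in `W_e`
or does not meet `W_e`. -/
theorem stmt11 (k : Type) [Field k] {Q0 Q1 : Type} [Fintype Q0] (s t : Q1 → Q0)
    (d : Q0 → ℕ) (θ η : Q0 → ℝ)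
    (hθ : θ ∈ SstCone k s t d) (hη : η ∈ SstCone k s t d) :
    GITEquiv k s t d θ η ↔
      ∀ e : Q0 → ℕ, e ≤ d → e ≠ 0 → e ≠ d →
        segment ℝ θ η ⊆ Wall k s t d e ∨ segment ℝ θ η ∩ Wall k s t d e = ∅ :=
  stmt11_general k s t d θ η hθ hη.1
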